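/- Let n = dim A1 and assume the n-space-tuple Ramsey theorem holds for vector spaces over GF(2). Let A be a finite-dimensional subspace of V with A1 < A. Then for every r ∈ ℕ and every finite-dimensional subspace B ∈ K_{A1} with A ≤ B, there exists a finite-dimensional subspace C ∈ K_{A1} such that for every coloring ξ : {U ≤ C : π(U) = A1 and dim U = dim A} → {0, ..., r−1} there exists a subspace B' ≤ C with π(B') = A1 and dim B' = dim B such that ξ is constant on the set {U ≤ B' : π(U) = A1 and dim U = dim A}. -/

import Mathlib

open Module Submodule

/-- The coset `U + v` of a subspace `U`, as a subset. -/
def coset {X : Type*} [AddCommGroup X] [Module (ZMod 2) X]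
    (U : Submodule (ZMod 2) X) (v : X) : Set X :=
  {x | x - v ∈ U}

/-- `(U + v 0, ..., U + v (n-1))` is an `n`-space-tuple based on `U`: the vectors
`v 0, ..., v (n-1)` are linearly independent over `U`, i.e. their images in `X ⧸ U` are
linearly independent. -/
def IsSpaceTuple {X : Type*} [AddCommGroup X] [Module (ZMod 2) X]
    {n : ℕ} (U : Submodule (ZMod 2) X) (v : Fin n → X) : Prop :=
  LinearIndependent (ZMod 2) (fun i => (Submodule.Quotient.mk (v i) : X ⧸ U))

/-- The `n`-space-tuple Ramsey theorem over `GF(2)`: for all `t < k` and all `r` there is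
`m` such that in every `m`-dimensional `GF(2)`-vector space `X`, every `r`-coloring of the
`n`-space-tuples based on `t`-dimensional subspaces admits an `n`-space-tuple
`(W + w 0, ..., W + w (n-1))` with `dim W = k` all of whose `n`-space-subtuples based on
`t`-dimensional subspaces get the same color. -/
def TupleRamsey (n : ℕ) : Prop :=
  ∀ t k r : ℕ, t < k → ∃ m : ℕ,
    ∀ (X : Type) [AddCommGroup X] [Module (ZMod 2) X],
      Module.finrank (ZMod 2) X = m →
      ∀ ξ : (Fin n → Set X) → Fin r,
        ∃ (W : Submodule (ZMod 2) X) (w : Fin n → X),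
          Module.finrank (ZMod 2) W = k ∧ IsSpaceTuple W w ∧
          ∀ (U : Submodule (ZMod 2) X) (v : Fin n → X)
            (U' : Submodule (ZMod 2) X) (v' : Fin n → X),
            Module.finrank (ZMod 2) U = t → IsSpaceTuple U v →
            Module.finrank (ZMod 2) U' = t → IsSpaceTuple U' v' →
            (∀ i, coset U (v i) ⊆ coset W (w i)) →
            (∀ i, coset U' (v' i) ⊆ coset W (w i)) →
            ξ (fun i => coset U (v i)) = ξ (fun i => coset U' (v' i))

/-- `φ` embeds `GF(2)^n` into `GF(2)^m` so that the images of all `t`-dimensional subspaces have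
color `i`. -/
def HasMonoEmbedding {m : ℕ} {κ : Type*} (c : Submodule (ZMod 2) (Fin m → ZMod 2) → κ)
    (t n : ℕ) (i : κ) : Prop :=
  ∃ φ : (Fin n → ZMod 2) →ₗ[ZMod 2] (Fin m → ZMod 2), Function.Injective φ ∧
    ∀ U : Submodule (ZMod 2) (Fin n → ZMod 2), finrank (ZMod 2) U = t → c (U.map φ) = i

theorem exists_injective_linearMap_pi {n m : ℕ} (h : n ≤ m) :
    ∃ φ : (Fin n → ZMod 2) →ₗ[ZMod 2] (Fin m → ZMod 2), Function.Injective φ := by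
  refine (finrank_le_iff_exists_linearMap (R := ZMod 2)).mp ?_
  simpa using h

/-- A subspace of a product meeting the second factor trivially is the graph of a linear map over
its first projection. -/
theorem exists_eq_map_prod_of_disjoint_ker_fst {K Y Z : Type*} [Field K] [AddCommGroup Y]
    [Module K Y] [AddCommGroup Z] [Module K Z] {T : Submodule K (Y × Z)}
    (hT : Disjoint T (LinearMap.ker (LinearMap.fst K Y Z))) :
    ∃ a : Y →ₗ[K] Z,
      T = (T.map (LinearMap.fst K Y Z)).map (LinearMap.id.prod a) := by
  have hker : LinearMap.ker (LinearMap.fst K Y Z ∘ₗ T.subtype) = ⊥ := by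
    rw [LinearMap.ker_comp, ← Submodule.disjoint_iff_comap_eq_bot]
    exact hT
  obtain ⟨g, hg⟩ := LinearMap.exists_leftInverse_of_injective _ hker
  refine ⟨LinearMap.snd K Y Z ∘ₗ T.subtype ∘ₗ g, ?_⟩
  have key : ∀ x ∈ T,
      (LinearMap.id.prod (LinearMap.snd K Y Z ∘ₗ T.subtype ∘ₗ g)) x.1 = x := by
    intro x hx
    have h1 : g x.1 = ⟨x, hx⟩ := LinearMap.congr_fun hg ⟨x, hx⟩
    simp [h1]
  rw [← Submodule.map_comp]
  ext x
  constructor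
  · intro hx
    exact ⟨x, hx, key x hx⟩
  · rintro ⟨y, hy, rfl⟩
    have := key y hy
    simp only [LinearMap.comp_apply, LinearMap.fst_apply]
    rwa [this]

theorem finrank_map_of_disjoint_ker {K Y Z : Type*} [Field K] [AddCommGroup Y] [Module K Y]
    [AddCommGroup Z] [Module K Z] {f : Y →ₗ[K] Z} {T : Submodule K Y}
    (hT : Disjoint T (LinearMap.ker f)) : finrank K (T.map f) = finrank K T := by
  have hker : LinearMap.ker (f ∘ₗ T.subtype) = ⊥ := by
    rw [LinearMap.ker_comp, ← Submodule.disjoint_iff_comap_eq_bot]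
    exact hT
  rw [← LinearMap.finrank_range_of_inj (LinearMap.ker_eq_bot.mp hker), LinearMap.range_comp,
    Submodule.range_subtype]

theorem finrank_map_of_injective {K Y Z : Type*} [Field K] [AddCommGroup Y] [Module K Y]
    [AddCommGroup Z] [Module K Z] {f : Y →ₗ[K] Z} (hf : Function.Injective f)
    (T : Submodule K Y) : finrank K (T.map f) = finrank K T :=
  finrank_map_of_disjoint_ker (by rw [LinearMap.ker_eq_bot.mpr hf]; exact disjoint_bot_right)

/-- A subspace of `Y × K` is either transverse to the second factor or the full preimage of its
first projection. -/
theorem disjoint_ker_fst_or_eq_comap {K Y : Type*} [Field K] [AddCommGroup Y] [Module K Y]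
    [FiniteDimensional K Y] (T : Submodule K (Y × K)) :
    Disjoint T (LinearMap.ker (LinearMap.fst K Y K)) ∨
      T = (T.map (LinearMap.fst K Y K)).comap (LinearMap.fst K Y K) ∧
        finrank K T = finrank K (T.map (LinearMap.fst K Y K)) + 1 := by
  by_cases h : Disjoint T (LinearMap.ker (LinearMap.fst K Y K))
  · exact Or.inl h
  refine Or.inr ?_
  rw [LinearMap.disjoint_ker] at h
  push Not at h
  obtain ⟨⟨y, s⟩, hx, hy, hne⟩ := h
  obtain rfl : y = 0 := hy
  have hs : s ≠ 0 := fun hs => hne (by rw [hs]; rfl)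
  have hle : LinearMap.ker (LinearMap.fst K Y K) ≤ T := by
    rintro ⟨z, u⟩ hz
    obtain rfl : z = 0 := hz
    have := T.smul_mem (u / s) hx
    simpa [div_mul_cancel₀ u hs] using this
  refine ⟨by rw [Submodule.comap_map_eq, sup_eq_left.mpr hle], ?_⟩
  have hrn := LinearMap.finrank_range_add_finrank_ker (LinearMap.fst K Y K ∘ₗ T.subtype)
  rw [LinearMap.range_comp, Submodule.range_subtype, LinearMap.ker_comp] at hrn
  have hcomap : finrank K ((LinearMap.ker (LinearMap.fst K Y K)).comap T.subtype) = 1 := by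
    rw [(Submodule.comapSubtypeEquivOfLe hle).finrank_eq, LinearMap.ker_fst,
      LinearMap.finrank_range_of_inj LinearMap.inr_injective, finrank_self]
  omega

/-- For every coloring of the subspaces of a high-dimensional space there is an embedded copy of
`GF(2)^k × GF(2)` in which the color of a subspace transverse to the second factor depends only on
its first projection. -/
theorem exists_embedding_color_eq_of_map_fst_eq (k r : ℕ) :
    ∃ m : ℕ, ∀ c : Submodule (ZMod 2) (Fin m → ZMod 2) → Fin r,
      ∃ ψ : ((Fin k → ZMod 2) × ZMod 2) →ₗ[ZMod 2] (Fin m → ZMod 2), Function.Injective ψ ∧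
        ∀ T T' : Submodule (ZMod 2) ((Fin k → ZMod 2) × ZMod 2),
          Disjoint T (LinearMap.ker (LinearMap.fst (ZMod 2) (Fin k → ZMod 2) (ZMod 2))) →
          Disjoint T' (LinearMap.ker (LinearMap.fst (ZMod 2) (Fin k → ZMod 2) (ZMod 2))) →
          T.map (LinearMap.fst (ZMod 2) _ _) = T'.map (LinearMap.fst (ZMod 2) _ _) →
          c (T.map ψ) = c (T'.map ψ) := by
  have : Finite ((Fin k → ZMod 2) →ₗ[ZMod 2] ZMod 2) :=
    Finite.of_injective (fun f => (f : (Fin k → ZMod 2) → ZMod 2)) DFunLike.coe_injective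
  have : Finite (Submodule (ZMod 2) (Fin k → ZMod 2)) :=
    Finite.of_injective (fun S => (S : Set (Fin k → ZMod 2))) SetLike.coe_injective
  obtain ⟨ι, _, hι⟩ := Combinatorics.Line.exists_mono_in_high_dimension
    ((Fin k → ZMod 2) →ₗ[ZMod 2] ZMod 2) (Submodule (ZMod 2) (Fin k → ZMod 2) → Fin r)
  refine ⟨k + Fintype.card ι, fun c => ?_⟩
  let e : ((Fin k → ZMod 2) × (ι → ZMod 2)) ≃ₗ[ZMod 2] (Fin (k + Fintype.card ι) → ZMod 2) :=
    LinearEquiv.ofFinrankEq _ _ (by simp)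
  obtain ⟨l, d, hl⟩ := hι fun f T => c (T.map (e.toLinearMap ∘ₗ LinearMap.id.prod (LinearMap.pi f)))
  let q : ((Fin k → ZMod 2) × ZMod 2) →ₗ[ZMod 2] (ι → ZMod 2) :=
    LinearMap.pi fun i => (l.idxFun i).elim (LinearMap.snd _ _ _)
      fun g => g ∘ₗ LinearMap.fst _ _ _
  let ψ := e.toLinearMap ∘ₗ (LinearMap.fst (ZMod 2) (Fin k → ZMod 2) (ZMod 2)).prod q
  have hcolor : ∀ T : Submodule (ZMod 2) ((Fin k → ZMod 2) × ZMod 2),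
      Disjoint T (LinearMap.ker (LinearMap.fst (ZMod 2) (Fin k → ZMod 2) (ZMod 2))) →
      c (T.map ψ) = d (T.map (LinearMap.fst (ZMod 2) _ _)) := by
    intro T hT
    obtain ⟨a, ha⟩ := exists_eq_map_prod_of_disjoint_ker_fst hT
    rw [← hl a]
    conv_lhs => rw [ha]
    dsimp only
    rw [← Submodule.map_comp]
    congr 2
    refine LinearMap.ext fun y => ?_
    simp only [ψ, LinearMap.comp_apply]
    congr 1
    refine Prod.ext rfl (funext fun i => ?_)
    simp only [q, LinearMap.prod_apply, Function.prod, LinearMap.pi_apply]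
    cases h : l.idxFun i with
    | none => simp [h]
    | some g => simp [h]
  refine ⟨ψ, ?_, fun T T' hT hT' h => by rw [hcolor T hT, hcolor T' hT', h]⟩
  refine e.injective.comp (fun x y hxy => ?_)
  obtain ⟨i, hi⟩ := l.proper
  have hxy' : (x.1, q x) = (y.1, q y) := hxy
  have h2 : q x i = q y i := congrFun (Prod.mk.inj hxy').2 i
  have h1 : x.1 = y.1 := (Prod.mk.inj hxy').1
  refine Prod.ext h1 ?_
  simpa [q, hi] using h2

/-- The Ramsey theorem of Graham, Leeb and Rothschild for `t`-dimensional subspaces over `GF(2)`,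
in off-diagonal form. -/
theorem exists_hasMonoEmbedding (t : ℕ) :
    ∀ (r : ℕ) (k : Fin r → ℕ), ∃ m : ℕ,
      ∀ c : Submodule (ZMod 2) (Fin m → ZMod 2) → Fin r, ∃ i, HasMonoEmbedding c t (k i) i := by
  induction t with
  | zero =>
    intro r k
    refine ⟨∑ i, k i, fun c => ⟨c ⊥, ?_⟩⟩
    obtain ⟨φ, hφ⟩ := exists_injective_linearMap_pi
      (Finset.single_le_sum (f := k) (fun _ _ => Nat.zero_le _) (Finset.mem_univ (c ⊥)))
    refine ⟨φ, hφ, fun U hU => ?_⟩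
    rw [(Submodule.finrank_eq_zero (S := U)).mp hU, Submodule.map_bot]
  | succ t ih =>
    intro r k
    induction hs : ∑ i, k i using Nat.strong_induction_on generalizing k with
    | _ s ihs =>
    by_cases h0 : ∃ i, k i = 0
    · obtain ⟨i, hi⟩ := h0
      refine ⟨0, fun c => ⟨i, ?_⟩⟩
      rw [hi]
      refine ⟨LinearMap.id, Function.injective_id, fun U hU => ?_⟩
      have := Submodule.finrank_le U
      rw [finrank_fin_fun] at this
      omega
    push Not at h0
    have hlow : ∀ i, ∃ m : ℕ, ∀ c : Submodule (ZMod 2) (Fin m → ZMod 2) → Fin r,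
        ∃ j, HasMonoEmbedding c (t + 1) (Function.update k i (k i - 1) j) j := by
      intro i
      refine ihs _ ?_ _ rfl
      rw [← hs]
      refine Finset.sum_lt_sum (fun j _ => ?_) ⟨i, Finset.mem_univ i, ?_⟩
      · by_cases hj : j = i
        · subst hj; simp
        · simp [hj]
      · have := h0 i
        simp only [Function.update_self]
        omega
    choose M hM using hlow
    obtain ⟨N, hN⟩ := ih r fun _ => ∑ i, M i
    obtain ⟨m, hm⟩ := exists_embedding_color_eq_of_map_fst_eq N r
    refine ⟨m, fun c => ?_⟩
    obtain ⟨ψ, hψ, hψc⟩ := hm c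
    obtain ⟨i, φ, hφ, hφc⟩ := hN fun T => c ((T.comap (LinearMap.fst (ZMod 2) _ _)).map ψ)
    obtain ⟨ε, hε⟩ := exists_injective_linearMap_pi
      (Finset.single_le_sum (f := M) (fun _ _ => Nat.zero_le _) (Finset.mem_univ i))
    obtain ⟨j, χ, hχ, hχc⟩ := hM i fun U =>
      c (U.map (ψ ∘ₗ LinearMap.inl (ZMod 2) _ _ ∘ₗ φ ∘ₗ ε))
    obtain ⟨n, hn, θ, hθ, hhor, hver⟩ :
        ∃ n, n = Function.update k i (k i - 1) j ∧
        ∃ θ : (Fin n → ZMod 2) →ₗ[ZMod 2] (Fin N → ZMod 2), Function.Injective θ ∧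
        (∀ U : Submodule (ZMod 2) (Fin n → ZMod 2), finrank (ZMod 2) U = t + 1 →
          c ((U.map θ).map (ψ ∘ₗ LinearMap.inl (ZMod 2) _ _)) = j) ∧
        ∀ U : Submodule (ZMod 2) (Fin n → ZMod 2), finrank (ZMod 2) U = t →
          c (((U.map θ).comap (LinearMap.fst (ZMod 2) _ _)).map ψ) = i :=
      ⟨_, rfl, φ ∘ₗ ε ∘ₗ χ, hφ.comp (hε.comp hχ),
        fun U hU => Eq.trans
          (by simp only [← Submodule.map_comp, LinearMap.comp_assoc]) (hχc U hU),
        fun U hU => Eq.trans (by simp only [← Submodule.map_comp])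
          (hφc (U.map (ε ∘ₗ χ)) ((finrank_map_of_injective (f := ε ∘ₗ χ) (hε.comp hχ) U).trans hU))⟩
    clear hχc hχ χ
    refine ⟨j, ?_⟩
    by_cases hji : j = i
    · subst hji
      rw [Function.update_self] at hn
      let e : (Fin (k j) → ZMod 2) ≃ₗ[ZMod 2] ((Fin n → ZMod 2) × ZMod 2) :=
        LinearEquiv.ofFinrankEq _ _ (by have := h0 j; simp; omega)
      have hθ' : Function.Injective (θ.prodMap (LinearMap.id : ZMod 2 →ₗ[ZMod 2] ZMod 2)) :=
        hθ.prodMap Function.injective_id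
      refine ⟨ψ ∘ₗ θ.prodMap LinearMap.id ∘ₗ e.toLinearMap,
        hψ.comp (hθ'.comp e.injective), fun U hU => ?_⟩
      have hU' : finrank (ZMod 2) (U.map e.toLinearMap) = t + 1 := by
        rw [finrank_map_of_injective e.injective, hU]
      rw [Submodule.map_comp, Submodule.map_comp]
      generalize U.map e.toLinearMap = T at hU'
      obtain hT | ⟨hT, hfin⟩ := disjoint_ker_fst_or_eq_comap T
      · rw [hψc _ ((T.map (LinearMap.fst (ZMod 2) _ _)).map
          (LinearMap.inl (ZMod 2) _ _ ∘ₗ θ)) ?_ ?_ ?_]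
        · rw [Submodule.map_comp θ, ← Submodule.map_comp]
          refine hhor _ ?_
          rw [finrank_map_of_disjoint_ker hT, hU']
        · rw [LinearMap.disjoint_ker] at hT ⊢
          rintro _ ⟨x, hx, rfl⟩ hx0
          have hx1 : x.1 = 0 := hθ (by simpa using hx0)
          rw [hT x hx hx1, map_zero]
        · rw [LinearMap.disjoint_ker]
          rintro _ ⟨x, hx, rfl⟩ hx0
          have hx1 : θ x = 0 := hx0
          simp [hx1]
        · simp only [← Submodule.map_comp]
          rfl
      · rw [← hver (T.map (LinearMap.fst (ZMod 2) _ _)) (by omega)]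
        congr 2
        conv_lhs => rw [hT]
        ext x
        constructor
        · rintro ⟨y, hy, rfl⟩
          exact ⟨y.1, hy, rfl⟩
        · rintro ⟨y, hy, hyx⟩
          exact ⟨(y, x.2), hy, Prod.ext hyx rfl⟩
    · rw [Function.update_of_ne hji] at hn
      subst hn
      refine ⟨ψ ∘ₗ LinearMap.inl (ZMod 2) _ _ ∘ₗ θ,
        hψ.comp (LinearMap.inl_injective.comp hθ), fun U hU => ?_⟩
      refine Eq.trans ?_ (hhor U hU)
      rw [← Submodule.map_comp, LinearMap.comp_assoc]

theorem exists_injective_linearMap_into_ker {V : Type*} [AddCommGroup V] [Module (ZMod 2) V]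
    (hrank : Module.rank (ZMod 2) V = Cardinal.aleph0) (π : V →ₗ[ZMod 2] V)
    [FiniteDimensional (ZMod 2) (LinearMap.range π)] (m : ℕ) :
    ∃ j : (Fin m → ZMod 2) →ₗ[ZMod 2] V, Function.Injective j ∧ ∀ x, π (j x) = 0 := by
  have hker : (m : Cardinal) ≤ Module.rank (ZMod 2) (LinearMap.ker π) := by
    refine (Cardinal.natCast_lt_aleph0).le.trans ?_
    by_contra! hlt
    have hsum := LinearMap.rank_range_add_rank_ker π
    have hrange := Module.rank_lt_aleph0 (ZMod 2) (LinearMap.range π)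
    exact (Cardinal.add_lt_aleph0 hrange hlt).ne (hsum.trans hrank)
  obtain ⟨f, hf⟩ := Module.le_rank_iff_exists_linearMap.mp hker
  exact ⟨(LinearMap.ker π).subtype ∘ₗ f, (Submodule.injective_subtype _).comp hf,
    fun x => (f x).2⟩

/-- The subspace spanned by the image of `U` under `j` and the vectors `b i + j (v i)`, where `b`
is a basis of `A1`. -/
def tupleSpan {X V : Type*} [AddCommGroup X] [Module (ZMod 2) X] [AddCommGroup V]
    [Module (ZMod 2) V] {A1 : Submodule (ZMod 2) V} {n : ℕ} (j : X →ₗ[ZMod 2] V)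
    (b : Basis (Fin n) (ZMod 2) A1) (U : Submodule (ZMod 2) X) (v : Fin n → X) :
    Submodule (ZMod 2) V :=
  U.map j ⊔ span (ZMod 2) (Set.range fun i => (b i : V) + j (v i))

section TupleSpan

variable {X V : Type*} [AddCommGroup X] [Module (ZMod 2) X] [AddCommGroup V]
    [Module (ZMod 2) V] {A1 : Submodule (ZMod 2) V} {n : ℕ} {j : X →ₗ[ZMod 2] V}
    {π : V →ₗ[ZMod 2] V}

theorem exists_section_of_tuple (hπ : ∀ a ∈ A1, π a = a) (hj : ∀ x, π (j x) = 0)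
    (b : Basis (Fin n) (ZMod 2) A1) (v : Fin n → X) :
    ∃ σ : A1 →ₗ[ZMod 2] V, (∀ a, π (σ a) = a) ∧ (∀ i, σ (b i) = b i + j (v i)) ∧
      ∀ U, tupleSpan j b U v = U.map j ⊔ LinearMap.range σ := by
  refine ⟨b.constr (ZMod 2) fun i => (b i : V) + j (v i), fun a => ?_,
    fun i => b.constr_basis _ _ i, fun U => ?_⟩
  · have h : π ∘ₗ b.constr (ZMod 2) (fun i => (b i : V) + j (v i)) = A1.subtype :=
      b.ext fun i => by
        rw [LinearMap.comp_apply, b.constr_basis, map_add, hj, hπ _ (b i).2, add_zero]; rfl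
    exact LinearMap.congr_fun h a
  · rw [tupleSpan, b.constr_range]

theorem map_tupleSpan (hπ : ∀ a ∈ A1, π a = a) (hj : ∀ x, π (j x) = 0)
    (b : Basis (Fin n) (ZMod 2) A1) (U : Submodule (ZMod 2) X) (v : Fin n → X) :
    (tupleSpan j b U v).map π = A1 := by
  obtain ⟨σ, hσ, -, hU⟩ := exists_section_of_tuple hπ hj b v
  have hπσ : π ∘ₗ σ = A1.subtype := LinearMap.ext hσ
  have hπj : π ∘ₗ j = 0 := LinearMap.ext hj
  rw [hU, Submodule.map_sup, ← Submodule.map_comp, hπj, Submodule.map_zero, bot_sup_eq,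
    ← LinearMap.range_comp, hπσ, Submodule.range_subtype]

theorem mem_map_of_mem_tupleSpan (hπ : ∀ a ∈ A1, π a = a) (hj : ∀ x, π (j x) = 0)
    {b : Basis (Fin n) (ZMod 2) A1} {U : Submodule (ZMod 2) X} {v : Fin n → X} {x : V}
    (hx : x ∈ tupleSpan j b U v) (hx0 : π x = 0) : x ∈ U.map j := by
  obtain ⟨σ, hσ, -, hU⟩ := exists_section_of_tuple hπ hj b v
  rw [hU] at hx
  obtain ⟨_, ⟨u, hu, rfl⟩, _, ⟨a, rfl⟩, rfl⟩ := Submodule.mem_sup.mp hx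
  rw [map_add, hj, hσ, zero_add] at hx0
  obtain rfl : a = 0 := Subtype.ext hx0
  rw [map_zero, add_zero]
  exact ⟨u, hu, rfl⟩

theorem finrank_tupleSpan [FiniteDimensional (ZMod 2) X] (hinj : Function.Injective j)
    (hπ : ∀ a ∈ A1, π a = a) (hj : ∀ x, π (j x) = 0)
    (b : Basis (Fin n) (ZMod 2) A1) (U : Submodule (ZMod 2) X) (v : Fin n → X) :
    finrank (ZMod 2) (tupleSpan j b U v) = finrank (ZMod 2) U + n := by
  obtain ⟨σ, hσ, -, hU⟩ := exists_section_of_tuple hπ hj b v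
  have : FiniteDimensional (ZMod 2) A1 := b.finiteDimensional_of_finite
  have hσinj : Function.Injective σ := fun a a' h => Subtype.ext <| by rw [← hσ a, h, hσ]
  have hinf : U.map j ⊓ LinearMap.range σ = ⊥ := by
    rw [eq_bot_iff]
    rintro _ ⟨⟨u, -, hu⟩, a, rfl⟩
    have h0 : (a : V) = 0 := by rw [← hσ a, ← hu, hj]
    obtain rfl : a = 0 := Subtype.ext h0
    simp
  have h := Submodule.finrank_sup_add_finrank_inf_eq (U.map j) (LinearMap.range σ)
  rw [hinf, finrank_bot, add_zero, finrank_map_of_injective hinj,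
    LinearMap.finrank_range_of_inj hσinj, finrank_eq_card_basis b, Fintype.card_fin] at h
  rw [hU, h]

theorem exists_eq_tupleSpan (hπ : ∀ a ∈ A1, π a = a) (hj : ∀ x, π (j x) = 0)
    {b : Basis (Fin n) (ZMod 2) A1} {W : Submodule (ZMod 2) X} {w : Fin n → X}
    (hinj : Function.Injective j)
    {U : Submodule (ZMod 2) V} (hUW : U ≤ tupleSpan j b W w) (hU : U.map π = A1) :
    ∃ (U₀ : Submodule (ZMod 2) X) (v : Fin n → X),
      U₀ ≤ W ∧ (∀ i, v i - w i ∈ W) ∧ U = tupleSpan j b U₀ v := by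
  have hex : ∀ i, ∃ v, v - w i ∈ W ∧ (b i : V) + j v ∈ U := by
    intro i
    obtain ⟨x, hx, hxb⟩ : (b i : V) ∈ U.map π := hU ▸ (b i).2
    have hmem : (b i : V) + j (w i) ∈ tupleSpan j b W w :=
      Submodule.mem_sup_right (subset_span ⟨i, rfl⟩)
    obtain ⟨z, hz, hzx⟩ := mem_map_of_mem_tupleSpan hπ hj
      (Submodule.sub_mem _ (hUW hx) hmem) (by rw [map_sub, map_add, hj, hxb, hπ _ (b i).2]; simp)
    refine ⟨w i + z, by simpa using hz, ?_⟩
    rwa [map_add, hzx, ← add_assoc, add_sub_cancel]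
  choose v hvW hvU using hex
  have hle : U.comap j ≤ W := by
    intro x hx
    obtain ⟨z, hz, hzx⟩ := mem_map_of_mem_tupleSpan hπ hj (hUW hx) (hj x)
    rwa [← hinj hzx]
  have hspan : tupleSpan j b (U.comap j) v ≤ U := by
    refine sup_le (Submodule.map_comap_le _ _) (span_le.mpr ?_)
    rintro _ ⟨i, rfl⟩
    exact hvU i
  refine ⟨U.comap j, v, hle, hvW, le_antisymm (fun x hx => ?_) hspan⟩
  obtain ⟨y, hy, hyx⟩ : π x ∈ (tupleSpan j b (U.comap j) v).map π := by
    rw [map_tupleSpan hπ hj, ← hU]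
    exact ⟨x, hx, rfl⟩
  have hsub : x - y ∈ U := U.sub_mem hx (hspan hy)
  obtain ⟨z, -, hz⟩ := mem_map_of_mem_tupleSpan hπ hj (hUW hsub) (by rw [map_sub, hyx, sub_self])
  rw [← sub_add_cancel x y]
  refine Submodule.add_mem _ (Submodule.mem_sup_left ⟨z, ?_, hz⟩) hy
  change j z ∈ U
  rwa [hz]

theorem span_iUnion_image_coset [Nonempty (Fin n)] (b : Basis (Fin n) (ZMod 2) A1)
    (U : Submodule (ZMod 2) X) (v : Fin n → X) :
    span (ZMod 2) (⋃ i, (fun x => (b i : V) + j x) '' coset U (v i)) = tupleSpan j b U v := by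
  refine le_antisymm (span_le.mpr ?_) (sup_le ?_ (span_mono ?_))
  · rintro _ ⟨_, ⟨i, rfl⟩, x, hx, rfl⟩
    have h : (b i : V) + j x = j (x - v i) + ((b i : V) + j (v i)) := by
      rw [map_sub]; abel
    simp only
    rw [h]
    exact Submodule.add_mem _ (Submodule.mem_sup_left ⟨_, hx, rfl⟩)
      (Submodule.mem_sup_right (subset_span ⟨i, rfl⟩))
  · rintro _ ⟨u, hu, rfl⟩
    let i : Fin n := Classical.arbitrary _
    have h : j u = ((b i : V) + j (u + v i)) - ((b i : V) + j (v i)) := by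
      rw [map_add]; abel
    rw [h]
    refine Submodule.sub_mem _ (subset_span ?_) (subset_span ?_)
    · exact Set.mem_iUnion.mpr ⟨i, u + v i, by simpa [coset] using hu, rfl⟩
    · exact Set.mem_iUnion.mpr ⟨i, v i, by simp [coset], rfl⟩
  · rintro _ ⟨i, rfl⟩
    exact Set.mem_iUnion.mpr ⟨i, v i, by simp [coset], rfl⟩

end TupleSpan

theorem IsSpaceTuple.of_le {X : Type*} [AddCommGroup X] [Module (ZMod 2) X] {n : ℕ}
    {U W : Submodule (ZMod 2) X} {v w : Fin n → X} (hw : IsSpaceTuple W w) (hUW : U ≤ W)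
    (hvw : ∀ i, v i - w i ∈ W) : IsSpaceTuple U v := by
  refine LinearIndependent.of_comp (Submodule.mapQ U W LinearMap.id hUW) ?_
  have h : Submodule.mapQ U W LinearMap.id hUW ∘ (fun i => Submodule.Quotient.mk (v i)) =
      fun i => (Submodule.Quotient.mk (w i) : X ⧸ W) :=
    funext fun i => (Submodule.Quotient.eq W).mpr (hvw i)
  rw [h]
  exact hw

theorem coset_subset_coset {X : Type*} [AddCommGroup X] [Module (ZMod 2) X]
    {U W : Submodule (ZMod 2) X} {v w : X} (hUW : U ≤ W) (hvw : v - w ∈ W) :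
    coset U v ⊆ coset W w := fun x hx => by
  have := W.add_mem (hUW hx) hvw
  rwa [sub_add_sub_cancel] at this

/-- Assuming the `n`-space-tuple Ramsey theorem for `n = dim A1`, the family `K_{A1}` of
finite dimensional subspaces `U` of `V` with `π(U) = A1` (where `π` is an idempotent
linear map with image `A1`) has the Ramsey property with respect to copies of `A` in
copies of `B ∈ K_{A1}`, whenever `A1 < A ≤ B`. -/
theorem ramsey_for_K_A1_from_tuple_ramsey
    (V : Type*) [AddCommGroup V] [Module (ZMod 2) V]
    (hrank : Module.rank (ZMod 2) V = Cardinal.aleph0)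
    (π : V →ₗ[ZMod 2] V) (hidem : π ∘ₗ π = π)
    (A1 : Submodule (ZMod 2) V) (hA1 : LinearMap.range π = A1)
    (hA1fin : FiniteDimensional (ZMod 2) A1)
    (htuple : TupleRamsey (finrank (ZMod 2) A1))
    (A : Submodule (ZMod 2) V)
    (hAfin : FiniteDimensional (ZMod 2) A)
    (hA1A : A1 < A)
    (r : ℕ) (B : Submodule (ZMod 2) V)
    (hBfin : FiniteDimensional (ZMod 2) B)
    (hBK : Submodule.map π B = A1)
    (hAB : A ≤ B) :
    ∃ C : Submodule (ZMod 2) V,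
      FiniteDimensional (ZMod 2) C ∧ Submodule.map π C = A1 ∧
      ∀ ξ : Submodule (ZMod 2) V → Fin r,
        ∃ B' : Submodule (ZMod 2) V,
          B' ≤ C ∧ Submodule.map π B' = A1 ∧
          finrank (ZMod 2) B' = finrank (ZMod 2) B ∧
          ∀ U U' : Submodule (ZMod 2) V,
            U ≤ B' → Submodule.map π U = A1 → finrank (ZMod 2) U = finrank (ZMod 2) A →
            U' ≤ B' → Submodule.map π U' = A1 → finrank (ZMod 2) U' = finrank (ZMod 2) A →
            ξ U = ξ U' := by
  have hrangefin : FiniteDimensional (ZMod 2) (LinearMap.range π) := by rwa [hA1]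
  rcases Nat.eq_zero_or_pos (finrank (ZMod 2) A1) with h0 | hpos
  · have hπ0 : π = 0 := by
      rw [← LinearMap.range_eq_bot, hA1]
      exact Submodule.finrank_eq_zero.mp h0
    have hA1bot : A1 = ⊥ := Submodule.finrank_eq_zero.mp h0
    subst hπ0
    obtain ⟨m, hm⟩ := exists_hasMonoEmbedding (finrank (ZMod 2) A) r
      fun _ => finrank (ZMod 2) B
    obtain ⟨j, hinj, -⟩ := exists_injective_linearMap_into_ker hrank 0 m
    refine ⟨LinearMap.range j, inferInstance, by simp [hA1bot], fun ξ => ?_⟩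
    obtain ⟨i, φ, hφ, hmono⟩ := hm fun U => ξ (U.map j)
    have hjφ : Function.Injective (j ∘ₗ φ) := hinj.comp hφ
    have hcolor : ∀ U : Submodule (ZMod 2) V, U ≤ LinearMap.range (j ∘ₗ φ) →
        finrank (ZMod 2) U = finrank (ZMod 2) A → ξ U = i := by
      intro U hU hUA
      have hmap : (U.comap (j ∘ₗ φ)).map (j ∘ₗ φ) = U := by
        rw [Submodule.map_comap_eq, inf_eq_right.mpr hU]
      rw [← hmono (U.comap (j ∘ₗ φ))
        (by rw [← finrank_map_of_injective hjφ, hmap, hUA])]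
      simp only [← Submodule.map_comp, hmap]
    refine ⟨LinearMap.range (j ∘ₗ φ), LinearMap.range_comp_le_range _ _, by simp [hA1bot], ?_,
      fun U U' hU _ hUA hU' _ hUA' => by rw [hcolor U hU hUA, hcolor U' hU' hUA']⟩
    rw [LinearMap.finrank_range_of_inj hjφ, finrank_fin_fun]
  rcases hAB.eq_or_lt with rfl | hlt
  · exact ⟨A, hAfin, hBK, fun ξ => ⟨A, le_rfl, hBK, rfl, fun U U' hU _ hUA hU' _ hUA' => by
      rw [Submodule.eq_of_le_of_finrank_eq hU hUA, Submodule.eq_of_le_of_finrank_eq hU' hUA']⟩⟩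
  have hπ : ∀ a ∈ A1, π a = a := by
    rw [← hA1]
    rintro _ ⟨x, rfl⟩
    exact LinearMap.congr_fun hidem x
  have hA1lt := Submodule.finrank_lt_finrank_of_lt hA1A
  have hABlt := Submodule.finrank_lt_finrank_of_lt hlt
  let b := finBasis (ZMod 2) A1
  have : Nonempty (Fin (finrank (ZMod 2) A1)) := ⟨⟨0, hpos⟩⟩
  obtain ⟨m, hm⟩ := htuple (finrank (ZMod 2) A - finrank (ZMod 2) A1)
    (finrank (ZMod 2) B - finrank (ZMod 2) A1) r (by omega)
  obtain ⟨j, hinj, hj⟩ := exists_injective_linearMap_into_ker hrank π m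
  refine ⟨LinearMap.range j ⊔ A1, inferInstance, ?_, fun ξ => ?_⟩
  · have hπj : π ∘ₗ j = 0 := LinearMap.ext hj
    have hmapA1 : A1.map π = A1 := by
      rw [← hA1, ← LinearMap.range_comp, hidem]
    rw [Submodule.map_sup, ← LinearMap.range_comp, hπj, LinearMap.range_zero, bot_sup_eq, hmapA1]
  obtain ⟨W, w, hW, hw, hmono⟩ := hm (Fin m → ZMod 2) (by simp) fun S =>
    ξ (span (ZMod 2) (⋃ i, (fun x => (b i : V) + j x) '' S i))
  simp only [span_iUnion_image_coset] at hmono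
  refine ⟨tupleSpan j b W w, ?_, map_tupleSpan hπ hj b W w, ?_, ?_⟩
  · refine sup_le (LinearMap.map_le_range.trans le_sup_left) (span_le.mpr ?_)
    rintro _ ⟨i, rfl⟩
    exact Submodule.add_mem _ (Submodule.mem_sup_right (b i).2)
      (Submodule.mem_sup_left ⟨w i, rfl⟩)
  · rw [finrank_tupleSpan hinj hπ hj, hW]
    omega
  · intro U U' hU hUπ hUA hU' hUπ' hUA'
    obtain ⟨U₀, v, hU₀, hv, rfl⟩ := exists_eq_tupleSpan hπ hj hinj hU hUπ
    obtain ⟨U₀', v', hU₀', hv', rfl⟩ := exists_eq_tupleSpan hπ hj hinj hU' hUπ'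
    rw [finrank_tupleSpan hinj hπ hj] at hUA hUA'
    exact hmono U₀ v U₀' v' (by omega) (hw.of_le hU₀ hv) (by omega) (hw.of_le hU₀' hv')
      (fun i => coset_subset_coset hU₀ (hv i)) (fun i => coset_subset_coset hU₀' (hv' i))
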